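/- arXiv:0707.0917 — 5 statements merged into one kernel-verified Lean document; each statement's English description precedes it below -/
import Mathlib

section
/- Let σ ⊆ E be a convex cone, V ⊆ E a finite nonempty set, Δ = convexHull(V) + σ, and let δ ⊆ ℝ × E be the homogenization of Δ. Then for every pair (r,u) ∈ ℝ × E, we have (r,u) ∈ δ* if and only if u ∈ σ* and r + ⟪u,v⟫ ≥ 0 for all v ∈ Δ. -/
open scoped RealInnerProductSpace Pointwise

/-- A convex cone: contains `0`, and is closed under addition and under
multiplication by nonnegative real scalars. -/
def IsConvexCone {E : Type*} [AddCommMonoid E] [Module ℝ E] (σ : Set E) : Prop :=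
  (0 : E) ∈ σ ∧ (∀ x ∈ σ, ∀ y ∈ σ, x + y ∈ σ) ∧ ∀ c : ℝ, 0 ≤ c → ∀ x ∈ σ, c • x ∈ σ

/-- The convex cone generated by a set `T`: the set of all finite nonnegative
linear combinations of elements of `T`. -/
def coneGen {E : Type*} [AddCommMonoid E] [Module ℝ E] (T : Set E) : Set E :=
  {x | ∃ (n : ℕ) (c : Fin n → ℝ) (v : Fin n → E),
    (∀ i, 0 ≤ c i) ∧ (∀ i, v i ∈ T) ∧ x = ∑ i, c i • v i}

/-- The dual cone of a set in a real inner product space: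
`S* = {u | ⟪u,v⟫ ≥ 0 for all v ∈ S}`. -/
def dualCone {E : Type*} [NormedAddCommGroup E] [InnerProductSpace ℝ E] (S : Set E) : Set E :=
  {u | ∀ v ∈ S, 0 ≤ ⟪u, v⟫}

/-- The dual cone of a set in `ℝ × E`, with respect to the inner product
`⟪(r,u),(k,v)⟫ = r·k + ⟪u,v⟫`. -/
def dualConeProd {E : Type*} [NormedAddCommGroup E] [InnerProductSpace ℝ E]
    (S : Set (ℝ × E)) : Set (ℝ × E) :=
  {p | ∀ q ∈ S, 0 ≤ p.1 * q.1 + ⟪p.2, q.2⟫}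

/-- The homogenization of a polyhedron `Δ` with tail cone `σ`: the convex cone
in `ℝ × E` generated by `({0} × σ) ∪ ({1} × Δ)`. -/
def homog {E : Type*} [AddCommMonoid E] [Module ℝ E] (σ Δ : Set E) : Set (ℝ × E) :=
  coneGen ((({0} : Set ℝ) ×ˢ σ) ∪ (({1} : Set ℝ) ×ˢ Δ))

/-!
Pairing with a fixed `(r, u)` is a linear functional on `ℝ × E`, so it is nonnegative on a generated
cone as soon as it is nonnegative on the generators. It takes the value `⟪u, v⟫` at the generators
`(0, v)` with `v ∈ σ`, and the value `r + ⟪u, v⟫` at the generators `(1, v)` with `v ∈ Δ`.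
-/

section ConeGen

variable {M N : Type*} [AddCommMonoid M] [Module ℝ M]
  [AddCommMonoid N] [Preorder N] [IsOrderedAddMonoid N] [Module ℝ N] [PosSMulMono ℝ N]

theorem subset_coneGen (T : Set M) : T ⊆ coneGen T := fun x hx =>
  ⟨1, fun _ => 1, fun _ => x, fun _ => zero_le_one, fun _ => hx, by simp⟩

theorem forall_mem_coneGen_map_nonneg_iff (f : M →ₗ[ℝ] N) (T : Set M) :
    (∀ x ∈ coneGen T, 0 ≤ f x) ↔ ∀ x ∈ T, 0 ≤ f x := by
  refine ⟨fun hf x hx => hf x (subset_coneGen T hx), ?_⟩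
  rintro hf _ ⟨n, c, v, hc, hv, rfl⟩
  simp only [map_sum, map_smul]
  exact Finset.sum_nonneg fun i _ => smul_nonneg (hc i) (hf (v i) (hv i))

end ConeGen

section DualConeProd

variable {E : Type*} [NormedAddCommGroup E] [InnerProductSpace ℝ E]

theorem dualConeProd_coneGen (T : Set (ℝ × E)) : dualConeProd (coneGen T) = dualConeProd T :=
  Set.ext fun p =>
    forall_mem_coneGen_map_nonneg_iff ((LinearMap.mulLeft ℝ p.1).coprod (innerₗ E p.2)) T

theorem dualConeProd_union (S T : Set (ℝ × E)) :
    dualConeProd (S ∪ T) = dualConeProd S ∩ dualConeProd T :=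
  Set.ext fun _ => by
    simp only [dualConeProd, Set.mem_inter_iff, Set.mem_ofPred_eq, Set.mem_union, or_imp,
      forall_and]

theorem mem_dualConeProd_singleton_prod {r k : ℝ} {u : E} {S : Set E} :
    (r, u) ∈ dualConeProd ({k} ×ˢ S) ↔ ∀ v ∈ S, 0 ≤ r * k + ⟪u, v⟫ := by
  constructor
  · exact fun h v hv => h (k, v) ⟨rfl, hv⟩
  · rintro h ⟨_, v⟩ ⟨rfl, hv⟩
    exact h v hv

theorem dual_of_homogenization_general (σ Δ : Set E) (r : ℝ) (u : E) :
    (r, u) ∈ dualConeProd (homog σ Δ) ↔ u ∈ dualCone σ ∧ ∀ v ∈ Δ, 0 ≤ r + ⟪u, v⟫ := by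
  rw [homog, dualConeProd_coneGen, dualConeProd_union, Set.mem_inter_iff,
    mem_dualConeProd_singleton_prod, mem_dualConeProd_singleton_prod]
  simp only [mul_zero, zero_add, mul_one, dualCone, Set.mem_ofPred_eq]

end DualConeProd

/-- `(r,u) ∈ δ*` iff `u ∈ σ*` and `r + ⟪u,v⟫ ≥ 0` for all `v ∈ Δ`. -/
theorem dual_of_homogenization
    {E : Type*} [NormedAddCommGroup E] [InnerProductSpace ℝ E] [FiniteDimensional ℝ E]
    (σ : Set E) (hσ : IsConvexCone σ) (V : Finset E) (hV : V.Nonempty)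
    (Δ : Set E) (hΔ : Δ = convexHull ℝ (V : Set E) + σ)
    (δ : Set (ℝ × E)) (hδ : δ = homog σ Δ) :
    ∀ (r : ℝ) (u : E), (r, u) ∈ dualConeProd δ ↔
      u ∈ dualCone σ ∧ ∀ v ∈ Δ, 0 ≤ r + ⟪u, v⟫ := by
  subst hδ
  exact dual_of_homogenization_general σ Δ
end

section
/- Let σ ⊆ E be a convex cone, V ⊆ E a finite nonempty set, Δ = convexHull(V) + σ, and let δ ⊆ ℝ × E be the homogenization of Δ. Then for every pair (r,u) ∈ ℝ × E, we have (r,u) ∈ δ* if and only if u ∈ σ* and r ≥ −min_{v ∈ V} ⟪u,v⟫ (the minimum taken over the finite set V). -/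
open scoped RealInnerProductSpace Pointwise

/-! Nonnegativity of a linear functional on the cone generated by `T` need only be tested on `T`.
Tested on the generators of the homogenization, `(r, u)` lies in `δ*` exactly when `u` is
nonnegative on `σ` and at least `-r` on `Δ`. Once `u ∈ σ*`, adding elements of `σ` cannot decrease
`⟪u, ·⟫`, and a half-space contains `convexHull V` as soon as it contains `V`, so the bound on `Δ`
reduces to the bound on `V`. -/

theorem subset_coneGen_s1 {F : Type*} [AddCommMonoid F] [Module ℝ F] (T : Set F) :
    T ⊆ coneGen T :=
  fun x hx => ⟨1, fun _ => 1, fun _ => x, fun _ => zero_le_one, fun _ => hx, by simp⟩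

section LinearMap

variable {F M : Type*} [AddCommMonoid F] [Module ℝ F] [AddCommMonoid M] [PartialOrder M]
  [IsOrderedAddMonoid M] [Module ℝ M] [PosSMulMono ℝ M]

theorem forall_mem_coneGen_nonneg_iff (f : F →ₗ[ℝ] M) {T : Set F} :
    (∀ x ∈ coneGen T, 0 ≤ f x) ↔ ∀ x ∈ T, 0 ≤ f x := by
  refine ⟨fun h x hx => h x (subset_coneGen_s1 T hx), ?_⟩
  rintro h _ ⟨n, c, v, hc, hv, rfl⟩
  simp only [map_sum, map_smul]
  exact Finset.sum_nonneg fun i _ => smul_nonneg (hc i) (h (v i) (hv i))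

theorem forall_mem_convexHull_le_iff (f : F →ₗ[ℝ] M) {S : Set F} {b : M} :
    (∀ x ∈ convexHull ℝ S, b ≤ f x) ↔ ∀ x ∈ S, b ≤ f x :=
  (convex_halfSpace_ge f.isLinear b).convexHull_subset_iff

end LinearMap

theorem forall_mem_add_le_iff {F M G : Type*} [AddZeroClass F] [AddZeroClass M] [Preorder M]
    [AddLeftMono M] [FunLike G F M] [AddHomClass G F M] (f : G) {S T : Set F} (h0 : 0 ∈ T)
    (hT : ∀ y ∈ T, 0 ≤ f y) {b : M} :
    (∀ x ∈ S + T, b ≤ f x) ↔ ∀ x ∈ S, b ≤ f x := by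
  refine ⟨fun h x hx => h x (Set.subset_add_left S h0 hx), ?_⟩
  rintro h _ ⟨x, hx, y, hy, rfl⟩
  calc b ≤ f x := h x hx
    _ ≤ f x + f y := le_add_of_nonneg_right (hT y hy)
    _ = f (x + y) := (map_add f x y).symm

section DualCone

variable {E : Type*} [NormedAddCommGroup E] [InnerProductSpace ℝ E]

theorem mem_dualConeProd_singleton_prod_iff {k : ℝ} {S : Set E} {r : ℝ} {u : E} :
    (r, u) ∈ dualConeProd ({k} ×ˢ S) ↔ ∀ x ∈ S, 0 ≤ r * k + ⟪u, x⟫ := by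
  simp only [dualConeProd, Set.mem_ofPred_eq, Set.forall_prod_set, Set.mem_singleton_iff,
    forall_eq]

theorem mem_dualConeProd_homog_iff {σ Δ : Set E} {r : ℝ} {u : E} :
    (r, u) ∈ dualConeProd (homog σ Δ) ↔ u ∈ dualCone σ ∧ ∀ x ∈ Δ, -r ≤ ⟪u, x⟫ := by
  rw [homog, dualConeProd_coneGen, dualConeProd_union, Set.mem_inter_iff,
    mem_dualConeProd_singleton_prod_iff, mem_dualConeProd_singleton_prod_iff]
  simp only [mul_zero, zero_add, mul_one, neg_le_iff_add_nonneg']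
  rfl

theorem mem_dualConeProd_homog_convexHull_add_iff {σ : Set E} (hσ : 0 ∈ σ) {S : Set E} {r : ℝ}
    {u : E} :
    (r, u) ∈ dualConeProd (homog σ (convexHull ℝ S + σ)) ↔
      u ∈ dualCone σ ∧ ∀ v ∈ S, -r ≤ ⟪u, v⟫ := by
  rw [mem_dualConeProd_homog_iff]
  refine and_congr_right fun hu => ?_
  calc (∀ x ∈ convexHull ℝ S + σ, -r ≤ ⟪u, x⟫)
      ↔ ∀ x ∈ convexHull ℝ S, -r ≤ ⟪u, x⟫ := forall_mem_add_le_iff (innerₛₗ ℝ u) hσ hu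
    _ ↔ ∀ v ∈ S, -r ≤ ⟪u, v⟫ := forall_mem_convexHull_le_iff (innerₛₗ ℝ u)

theorem dual_of_homogenization_min_general {σ : Set E} (hσ : 0 ∈ σ) {V : Finset E}
    (hV : V.Nonempty) {r : ℝ} {u : E} :
    (r, u) ∈ dualConeProd (homog σ (convexHull ℝ (V : Set E) + σ)) ↔
      u ∈ dualCone σ ∧ -(V.inf' hV fun v => ⟪u, v⟫) ≤ r := by
  rw [mem_dualConeProd_homog_convexHull_add_iff hσ, neg_le, Finset.le_inf'_iff]
  simp only [Finset.mem_coe]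

end DualCone

/-- `(r,u) ∈ δ*` iff `u ∈ σ*` and `r ≥ -min_{v ∈ V} ⟪u,v⟫`. -/
theorem dual_of_homogenization_min
    {E : Type*} [NormedAddCommGroup E] [InnerProductSpace ℝ E] [FiniteDimensional ℝ E]
    (σ : Set E) (hσ : IsConvexCone σ) (V : Finset E) (hV : V.Nonempty)
    (Δ : Set E) (hΔ : Δ = convexHull ℝ (V : Set E) + σ)
    (δ : Set (ℝ × E)) (hδ : δ = homog σ Δ) :
    ∀ (r : ℝ) (u : E), (r, u) ∈ dualConeProd δ ↔
      u ∈ dualCone σ ∧ -(V.inf' hV fun v => ⟪u, v⟫) ≤ r := by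
  subst hΔ hδ
  exact fun _ _ => dual_of_homogenization_min_general hσ.1 hV
end

section
/- Let G ⊆ E be a finite set, let σ be the convex cone generated by G (the set of finite nonnegative linear combinations of elements of G), let V ⊆ E be a finite nonempty set, and let Δ = convexHull(V) + σ. Then the homogenization δ of Δ equals the convex cone in ℝ × E generated by the finite set ({0} × G) ∪ ({1} × V); in particular δ is a finitely generated (polyhedral) cone. -/
open scoped RealInnerProductSpace Pointwise

/-!
Both generating sets span the same cone because `{0} × ·` commutes with conical hulls, `{1} × ·`
commutes with convex hulls, and `{1} × (conv V + σ) = {1} × conv V + {0} × σ`. A conical hull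
absorbs both convex hulls and sums, so replacing `σ` by `G` and `conv V + σ` by `V` loses nothing.
-/

section PointedCone

open PointedCone

variable {R E F : Type*} [Semiring R] [PartialOrder R]
variable [AddCommMonoid E] [Module R E] [AddCommMonoid F] [Module R F]

theorem singleton_prod_convexHull_subset (a : F) (s : Set E) :
    {a} ×ˢ convexHull R s ⊆ convexHull R ({a} ×ˢ s) := by
  have convex_slice : Convex R {x | (a, x) ∈ convexHull R ({a} ×ˢ s)} := by
    intro x hx y hy b c hb hc hbc
    simpa [Convex.combo_self hbc] using convex_convexHull R ({a} ×ˢ s) hx hy hb hc hbc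
  have subset_slice : s ⊆ {x | (a, x) ∈ convexHull R ({a} ×ˢ s)} :=
    fun _ hx ↦ subset_convexHull R _ ⟨rfl, hx⟩
  rintro ⟨_, x⟩ ⟨rfl, hx⟩
  exact convexHull_min subset_slice convex_slice hx

variable [IsOrderedRing R]

theorem convexHull_subset_hull (s : Set E) : convexHull R s ⊆ (hull R s : Set E) :=
  convexHull_min subset_hull (hull R s).convex

theorem singleton_zero_prod_hull (s : Set E) :
    ({0} : Set F) ×ˢ (hull R s : Set E) = hull R (({0} : Set F) ×ˢ s) := by
  simp only [Set.singleton_prod]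
  exact congrArg SetLike.coe (Submodule.map_span (LinearMap.inr {c : R // 0 ≤ c} F E) s)

theorem singleton_prod_convexHull_add_hull_subset (a : F) (s t : Set E) :
    {a} ×ˢ (convexHull R t + (hull R s : Set E)) ⊆
      (hull R ({0} ×ˢ s ∪ {a} ×ˢ t) : Set (F × E)) := by
  set C := hull R ({0} ×ˢ s ∪ {a} ×ˢ t : Set (F × E))
  have convexHull_subset : {a} ×ˢ convexHull R t ⊆ (C : Set (F × E)) :=
    calc {a} ×ˢ convexHull R t
      _ ⊆ convexHull R ({a} ×ˢ t) := singleton_prod_convexHull_subset a t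
      _ ⊆ hull R ({a} ×ˢ t) := convexHull_subset_hull _
      _ ⊆ C := Submodule.span_mono Set.subset_union_right
  have hull_subset : {0} ×ˢ (hull R s : Set E) ⊆ (C : Set (F × E)) := by
    rw [singleton_zero_prod_hull]
    exact Submodule.span_mono Set.subset_union_left
  calc {a} ×ˢ (convexHull R t + (hull R s : Set E))
    _ = {a} ×ˢ convexHull R t + {0} ×ˢ (hull R s : Set E) := by
      rw [Set.prod_add_prod_comm, Set.singleton_add_singleton, add_zero]
    _ ⊆ C := Set.add_subset_iff.2 fun _ hx _ hy ↦ C.add_mem (convexHull_subset hx) (hull_subset hy)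

theorem hull_zero_prod_hull_union_singleton_prod_convexHull_add_hull (a : F) (s t : Set E) :
    hull R ({0} ×ˢ (hull R s : Set E) ∪ {a} ×ˢ (convexHull R t + (hull R s : Set E))) =
      hull R ({0} ×ˢ s ∪ {a} ×ˢ t) := by
  apply le_antisymm
  · refine Submodule.span_le.2 (Set.union_subset ?_ ?_)
    · rw [singleton_zero_prod_hull]
      exact Submodule.span_mono Set.subset_union_left
    · exact singleton_prod_convexHull_add_hull_subset a s t
  · have subset_convexHull_add_hull : t ⊆ convexHull R t + (hull R s : Set E) :=
      (subset_convexHull R t).trans (Set.subset_add_left _ (zero_mem (hull R s)))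
    exact Submodule.span_mono <| Set.union_subset_union
      (Set.prod_mono_right subset_hull) (Set.prod_mono_right subset_convexHull_add_hull)

end PointedCone

theorem coneGen_eq_hull {E : Type*} [AddCommMonoid E] [Module ℝ E] (T : Set E) :
    coneGen T = (PointedCone.hull ℝ T : Set E) := by
  ext x
  rw [SetLike.mem_coe, Submodule.mem_span_set']
  constructor
  · rintro ⟨n, c, v, hc, hv, rfl⟩
    exact ⟨n, fun i ↦ ⟨c i, hc i⟩, fun i ↦ ⟨v i, hv i⟩, rfl⟩
  · rintro ⟨n, c, v, rfl⟩
    exact ⟨n, fun i ↦ c i, fun i ↦ v i, fun i ↦ (c i).2, fun i ↦ (v i).2, rfl⟩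

theorem homogenization_finitely_generated_general {E : Type*} [AddCommMonoid E] [Module ℝ E]
    (G V : Set E) :
    homog (coneGen G) (convexHull ℝ V + coneGen G) =
      coneGen ((({0} : Set ℝ) ×ˢ G) ∪ (({1} : Set ℝ) ×ˢ V)) := by
  simp only [homog, coneGen_eq_hull]
  exact congrArg SetLike.coe
    (hull_zero_prod_hull_union_singleton_prod_convexHull_add_hull 1 G V)

/-- if `σ` is generated by the finite set `G`, then the
homogenization of `Δ = conv(V) + σ` is the cone generated by
`({0} × G) ∪ ({1} × V)`; in particular it is finitely generated. -/
theorem homogenization_finitely_generated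
    {E : Type*} [NormedAddCommGroup E] [InnerProductSpace ℝ E] [FiniteDimensional ℝ E]
    (G : Finset E) (σ : Set E) (hσ : σ = coneGen (G : Set E))
    (V : Finset E) (hV : V.Nonempty)
    (Δ : Set E) (hΔ : Δ = convexHull ℝ (V : Set E) + σ) :
    homog σ Δ =
      coneGen ((({0} : Set ℝ) ×ˢ (G : Set E)) ∪ (({1} : Set ℝ) ×ˢ (V : Set E))) := by
  subst hσ hΔ
  exact homogenization_finitely_generated_general (G : Set E) (V : Set E)
end

section
/- Let σ ⊆ E be a closed convex cone, V ⊆ E a finite nonempty set, and Δ = convexHull(V) + σ. Then Δ is recovered from its support function on the dual cone: Δ = {x ∈ E : for every u ∈ σ*, ⟪u,x⟫ ≥ min_{v ∈ V} ⟪u,v⟫}. -/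
open scoped RealInnerProductSpace Pointwise

/-!
By Hahn–Banach, the closure of a convex set `D` consists of the points `x` with `inf f(D) ≤ f x` for
every continuous functional `f`. For `D = conv V + σ` this infimum is `inf f(V)` if `f` is
nonnegative on `σ`; otherwise some ray of `σ` drives it to `-∞`, so that `f` imposes no condition.
The remaining functionals are the `⟪u, ·⟫` with `u ∈ σ*`, by Riesz. If `V` is finite then `conv V`
is compact, so `conv V + σ` is already closed whenever `σ` is.
-/

section ConvexCone

variable {E : Type*} [AddCommMonoid E] [Module ℝ E]

theorem IsConvexCone.convex {σ : Set E} (hσ : IsConvexCone σ) : Convex ℝ σ :=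
  fun x hx y hy a b ha hb _ => hσ.2.1 _ (hσ.2.2 a ha x hx) _ (hσ.2.2 b hb y hy)

end ConvexCone

section LowerSupport

variable {E : Type*} [AddCommGroup E] [Module ℝ E] [TopologicalSpace E]

/-- The lower support function `f ↦ inf {f v | v ∈ S}` of a set `S`, defined on the continuous
dual. It takes values in `EReal`, so that it is `⊥` at functionals unbounded below on `S` and `⊤`
everywhere if `S` is empty. -/
noncomputable def lowerSupport (S : Set E) (f : StrongDual ℝ E) : EReal :=
  ⨅ v ∈ S, (f v : EReal)

theorem lowerSupport_le {S : Set E} {v : E} (hv : v ∈ S) (f : StrongDual ℝ E) :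
    lowerSupport S f ≤ f v :=
  iInf₂_le v hv

theorem coe_le_lowerSupport {S : Set E} {f : StrongDual ℝ E} {c : ℝ} :
    (c : EReal) ≤ lowerSupport S f ↔ ∀ v ∈ S, c ≤ f v := by
  simp only [lowerSupport, le_iInf_iff, EReal.coe_le_coe_iff]

theorem lowerSupport_anti {S T : Set E} (hST : S ⊆ T) (f : StrongDual ℝ E) :
    lowerSupport T f ≤ lowerSupport S f :=
  biInf_mono hST

theorem lowerSupport_convexHull (S : Set E) (f : StrongDual ℝ E) :
    lowerSupport (convexHull ℝ S) f = lowerSupport S f := by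
  refine (lowerSupport_anti (subset_convexHull ℝ S) f).antisymm ?_
  refine EReal.ge_of_forall_gt_iff_ge.mp fun c hc => coe_le_lowerSupport.mpr ?_
  exact convexHull_min (coe_le_lowerSupport.mp hc.le) (convex_halfSpace_ge f.isLinear c)

theorem lowerSupport_add_of_nonneg {S T : Set E} (h0 : (0 : E) ∈ T) {f : StrongDual ℝ E}
    (hf : ∀ t ∈ T, 0 ≤ f t) : lowerSupport (S + T) f = lowerSupport S f := by
  refine (lowerSupport_anti (Set.subset_add_left S h0) f).antisymm (le_iInf₂ ?_)
  rintro _ ⟨v, hv, t, ht, rfl⟩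
  refine (lowerSupport_le hv f).trans (EReal.coe_le_coe_iff.mpr ?_)
  simpa only [map_add] using le_add_of_nonneg_right (hf t ht)

theorem lowerSupport_add_eq_bot {S σ : Set E} (hS : S.Nonempty) (hσ : IsConvexCone σ)
    {f : StrongDual ℝ E} {s : E} (hs : s ∈ σ) (hfs : f s < 0) : lowerSupport (S + σ) f = ⊥ := by
  obtain ⟨v, hv⟩ := hS
  refine (EReal.eq_bot_iff_forall_lt _).mpr fun c => ?_
  obtain ⟨n, hn⟩ := exists_nat_gt ((f v - c) / -f s)
  rw [div_lt_iff₀ (neg_pos.mpr hfs)] at hn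
  have hmem : v + (n : ℝ) • s ∈ S + σ := Set.add_mem_add hv (hσ.2.2 n n.cast_nonneg s hs)
  refine (lowerSupport_le hmem f).trans_lt (EReal.coe_lt_coe_iff.mpr ?_)
  simp only [map_add, map_smul, smul_eq_mul]
  linarith

theorem lowerSupport_coe_finset {V : Finset E} (hV : V.Nonempty) (f : StrongDual ℝ E) :
    lowerSupport (V : Set E) f = (V.inf' hV f : ℝ) := by
  refine le_antisymm ?_ (coe_le_lowerSupport.mpr fun v hv => Finset.inf'_le f hv)
  obtain ⟨v, hv, hmin⟩ := Finset.exists_mem_eq_inf' hV f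
  exact hmin ▸ lowerSupport_le hv f

variable [IsTopologicalAddGroup E] [ContinuousSMul ℝ E] [LocallyConvexSpace ℝ E]

theorem mem_closure_iff_forall_lowerSupport_le {D : Set E} (hD : Convex ℝ D) {x : E} :
    x ∈ closure D ↔ ∀ f : StrongDual ℝ E, lowerSupport D f ≤ f x := by
  refine ⟨fun hx f => ?_, fun hx => ?_⟩
  · refine EReal.ge_of_forall_gt_iff_ge.mp fun c hc => EReal.coe_le_coe_iff.mpr ?_
    exact closure_minimal (coe_le_lowerSupport.mp hc.le)
      (isClosed_le continuous_const f.continuous) hx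
  · by_contra hxD
    obtain ⟨f, c, hfx, hfD⟩ := geometric_hahn_banach_point_closed hD.closure isClosed_closure hxD
    have hc : (c : EReal) ≤ lowerSupport D f :=
      coe_le_lowerSupport.mpr fun v hv => (hfD v (subset_closure hv)).le
    exact (EReal.coe_le_coe_iff.mp (hc.trans (hx f))).not_gt hfx

theorem mem_closure_convexHull_add_iff (V : Set E) {σ : Set E} (hσ : IsConvexCone σ) {x : E} :
    x ∈ closure (convexHull ℝ V + σ) ↔
      ∀ f : StrongDual ℝ E, (∀ s ∈ σ, 0 ≤ f s) → lowerSupport V f ≤ f x := by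
  rw [mem_closure_iff_forall_lowerSupport_le ((convex_convexHull ℝ V).add hσ.convex)]
  refine ⟨fun hx f hf => ?_, fun hx f => ?_⟩
  · simpa only [lowerSupport_add_of_nonneg hσ.1 hf, lowerSupport_convexHull] using hx f
  · obtain rfl | hV := V.eq_empty_or_nonempty
    · simpa [lowerSupport] using hx 0 fun _ _ => le_rfl
    by_cases hf : ∀ s ∈ σ, 0 ≤ f s
    · simpa only [lowerSupport_add_of_nonneg hσ.1 hf, lowerSupport_convexHull] using hx f hf
    · push Not at hf
      obtain ⟨s, hs, hfs⟩ := hf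
      exact (lowerSupport_add_eq_bot hV.convexHull hσ hs hfs).trans_le bot_le

end LowerSupport

theorem polyhedron_eq_halfspace_intersection_general
    {E : Type*} [NormedAddCommGroup E] [InnerProductSpace ℝ E] [CompleteSpace E]
    {σ : Set E} (hσ : IsConvexCone σ) (V : Set E) :
    closure (convexHull ℝ V + σ) =
      {x : E | ∀ u ∈ dualCone σ, lowerSupport V (innerSL ℝ u) ≤ ⟪u, x⟫} := by
  ext x
  exact (mem_closure_convexHull_add_iff V hσ).trans
    (InnerProductSpace.toDual ℝ E).surjective.forall

/-- `Δ = conv(V) + σ` is recovered from its support function on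
the dual cone `σ*`. -/
theorem polyhedron_eq_halfspace_intersection
    {E : Type*} [NormedAddCommGroup E] [InnerProductSpace ℝ E] [FiniteDimensional ℝ E]
    (σ : Set E) (hσ : IsConvexCone σ) (hσc : IsClosed σ)
    (V : Finset E) (hV : V.Nonempty)
    (Δ : Set E) (hΔ : Δ = convexHull ℝ (V : Set E) + σ) :
    Δ = {x : E | ∀ u ∈ dualCone σ, (V.inf' hV fun v => ⟪u, v⟫) ≤ ⟪u, x⟫} := by
  have : CompleteSpace E := FiniteDimensional.complete ℝ E
  have hclosed := hσc.add_left_of_isCompact (V.finite_toSet.isCompact_convexHull ℝ)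
  rw [hΔ, ← hclosed.closure_eq, polyhedron_eq_halfspace_intersection_general hσ]
  simp only [lowerSupport_coe_finset hV, EReal.coe_le_coe_iff, innerSL_apply_apply]
  rfl
end

section
/- Let σ ⊆ E be a closed convex cone and for i = 1,2,3 let Δᵢ = convexHull(Vᵢ) + σ with Vᵢ ⊆ E finite and nonempty. If Δ₁ + Δ₃ = Δ₂ + Δ₃ (Minkowski sums), then Δ₁ = Δ₂. (Hence Minkowski addition on the semigroup Pol⁺_σ of polyhedra with tail cone σ is cancellative, so Pol⁺_σ embeds into its group of differences Pol_σ.) -/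
/-!
Rådström's cancellation law. If `A + C ⊆ B + C` with `B` convex, then iterating the inclusion gives
`n • A + C ⊆ n • B + C`, so every `a ∈ A` is of the form `b + (c' - c) / n` with `b ∈ B` and
`c, c' ∈ C`; for bounded nonempty `C` the error term vanishes as `n → ∞`, whence `a ∈ closure B`.
The tail cone of the third polyhedron, though unbounded, can be dropped before cancelling: since
`σ + σ = σ`, it is absorbed by the tail cone of the other summand.
-/

open scoped RealInnerProductSpace Pointwise

open Filter
open scoped Topology

section Cancellation

theorem natCast_smul_add_subset_natCast_smul_add {𝕜 E : Type*} [Field 𝕜] [LinearOrder 𝕜]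
    [IsStrictOrderedRing 𝕜] [AddCommGroup E] [Module 𝕜 E] {A B C : Set E} (hB : Convex 𝕜 B)
    (h : A + C ⊆ B + C) {n : ℕ} (hn : 1 ≤ n) : (n : 𝕜) • A + C ⊆ (n : 𝕜) • B + C := by
  induction n, hn using Nat.le_induction with
  | base => simpa only [Nat.cast_one, one_smul] using h
  | succ n _ ih =>
    calc ((n + 1 : ℕ) : 𝕜) • A + C
      _ ⊆ ((n : 𝕜) • A + A) + C := by
        gcongr
        simpa only [Nat.cast_succ, one_smul] using Set.add_smul_subset (n : 𝕜) 1 A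
      _ = (n : 𝕜) • A + (A + C) := add_assoc _ _ _
      _ ⊆ (n : 𝕜) • A + (B + C) := by gcongr
      _ = B + ((n : 𝕜) • A + C) := add_left_comm _ _ _
      _ ⊆ B + ((n : 𝕜) • B + C) := by gcongr
      _ = ((n : 𝕜) • B + B) + C := by rw [← add_assoc, add_comm B]
      _ = ((n + 1 : ℕ) : 𝕜) • B + C := by
        rw [Nat.cast_succ, hB.add_smul n.cast_nonneg zero_le_one, one_smul]

variable {E : Type*} [AddCommGroup E] [Module ℝ E] [TopologicalSpace E] [IsTopologicalAddGroup E]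
  {A B C : Set E}

theorem subset_closure_of_add_subset_add_right (hB : Convex ℝ B)
    (hC : Bornology.IsVonNBounded ℝ C) (hC_ne : C.Nonempty) (h : A + C ⊆ B + C) :
    A ⊆ closure B := by
  intro a ha
  obtain ⟨c₀, hc₀⟩ := hC_ne
  have exists_eq (n : ℕ) :
      ∃ b ∈ B, ∃ c ∈ C, (↑(n + 1) : ℝ) • b + c = (↑(n + 1) : ℝ) • a + c₀ := by
    obtain ⟨_, ⟨b, hb, rfl⟩, c, hc, hbc⟩ :=
      natCast_smul_add_subset_natCast_smul_add hB h n.succ_pos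
        (Set.add_mem_add (Set.smul_mem_smul_set ha) hc₀)
    exact ⟨b, hb, c, hc, hbc⟩
  choose b hb c hc hbc using exists_eq
  let ε (n : ℕ) : ℝ := (↑(n + 1))⁻¹
  have b_eq (n : ℕ) : b n = a + ε n • c₀ - ε n • c n := by
    have hε : ε n * ↑(n + 1) = 1 := inv_mul_cancel₀ (by positivity)
    rw [eq_sub_iff_add_eq]
    simpa only [smul_add, smul_smul, hε, one_smul] using congrArg (ε n • ·) (hbc n)
  have tendsto_ε_smul {x : ℕ → E} (hx : ∀ n, x n ∈ C) : Tendsto (ε • x) atTop (𝓝 0) :=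
    hC.smul_tendsto_zero (.of_forall hx)
      ((tendsto_inv_atTop_nhds_zero_nat (𝕜 := ℝ)).comp (tendsto_add_atTop_nat 1))
  have tendsto_b : Tendsto b atTop (𝓝 a) := by
    have := ((tendsto_ε_smul fun _ ↦ hc₀).const_add a).sub (tendsto_ε_smul hc)
    rw [add_zero, sub_zero] at this
    exact this.congr fun n ↦ (b_eq n).symm
  exact mem_closure_of_tendsto tendsto_b (.of_forall hb)

theorem eq_of_add_eq_add_right_of_isClosed (hA : Convex ℝ A) (hA_closed : IsClosed A)
    (hB : Convex ℝ B) (hB_closed : IsClosed B)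
    (hC : Bornology.IsVonNBounded ℝ C) (hC_ne : C.Nonempty) (h : A + C = B + C) : A = B :=
  Set.Subset.antisymm
    (hB_closed.closure_eq ▸ subset_closure_of_add_subset_add_right hB hC hC_ne h.subset)
    (hA_closed.closure_eq ▸ subset_closure_of_add_subset_add_right hA hC hC_ne h.superset)

end Cancellation

namespace IsConvexCone

variable {E : Type*} [AddCommMonoid E] [Module ℝ E] {σ : Set E}

theorem convex_s10 (hσ : IsConvexCone σ) : Convex ℝ σ :=
  fun x hx y hy s t hs ht _ ↦ hσ.2.1 _ (hσ.2.2 s hs x hx) _ (hσ.2.2 t ht y hy)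

theorem add_self (hσ : IsConvexCone σ) : σ + σ = σ :=
  Set.Subset.antisymm (Set.add_subset_iff.2 hσ.2.1) (Set.subset_add_left σ hσ.1)

theorem add_add_add_eq_add_add (hσ : IsConvexCone σ) (K L : Set E) :
    (K + σ) + (L + σ) = (K + σ) + L := by
  rw [add_add_add_comm, hσ.add_self, add_right_comm]

end IsConvexCone

theorem minkowski_cancellation_general {E : Type*} [AddCommGroup E] [Module ℝ E]
    [TopologicalSpace E] [IsTopologicalAddGroup E] {σ K₁ K₂ K₃ : Set E}
    (hσ : IsConvexCone σ) (hσc : IsClosed σ)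
    (hK₁ : IsCompact K₁) (hK₁_conv : Convex ℝ K₁) (hK₂ : IsCompact K₂) (hK₂_conv : Convex ℝ K₂)
    (hK₃ : Bornology.IsVonNBounded ℝ K₃) (hK₃_ne : K₃.Nonempty)
    (h : (K₁ + σ) + (K₃ + σ) = (K₂ + σ) + (K₃ + σ)) : K₁ + σ = K₂ + σ := by
  rw [hσ.add_add_add_eq_add_add, hσ.add_add_add_eq_add_add] at h
  exact eq_of_add_eq_add_right_of_isClosed
    (hK₁_conv.add hσ.convex_s10) (hσc.add_left_of_isCompact hK₁)
    (hK₂_conv.add hσ.convex_s10) (hσc.add_left_of_isCompact hK₂) hK₃ hK₃_ne h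

/-- Minkowski addition of polyhedra with tail cone `σ` is
cancellative: `Δ₁ + Δ₃ = Δ₂ + Δ₃` implies `Δ₁ = Δ₂`. -/
theorem minkowski_cancellation
    {E : Type*} [NormedAddCommGroup E] [InnerProductSpace ℝ E] [FiniteDimensional ℝ E]
    (σ : Set E) (hσ : IsConvexCone σ) (hσc : IsClosed σ)
    (V₁ V₂ V₃ : Finset E) (hV₁ : V₁.Nonempty) (hV₂ : V₂.Nonempty) (hV₃ : V₃.Nonempty)
    (Δ₁ Δ₂ Δ₃ : Set E)
    (hΔ₁ : Δ₁ = convexHull ℝ (V₁ : Set E) + σ)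
    (hΔ₂ : Δ₂ = convexHull ℝ (V₂ : Set E) + σ)
    (hΔ₃ : Δ₃ = convexHull ℝ (V₃ : Set E) + σ)
    (h : Δ₁ + Δ₃ = Δ₂ + Δ₃) :
    Δ₁ = Δ₂ := by
  subst hΔ₁ hΔ₂ hΔ₃
  exact minkowski_cancellation_general hσ hσc
    (V₁.finite_toSet.isCompact_convexHull ℝ) (convex_convexHull ℝ _)
    (V₂.finite_toSet.isCompact_convexHull ℝ) (convex_convexHull ℝ _)
    ((V₃.finite_toSet.isCompact_convexHull ℝ).isVonNBounded ℝ) hV₃.to_set.convexHull h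
end
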